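/- Let N be a natural number with N ≥ 3, let p, q be real numbers with 1 < p < N−1 and q > p−1, and set β = p/(q+1−p). Define λ(β) = β(p−1)+p−N, A = −(N−1)/(q+1) − β(pβ+p−N), B = (N−1−p)/p + β(pβ+p−N), and C = β²((N−1)/p − (pβ+p−N)·λ(β)). If A ≥ 0, B ≥ 0 and C ≥ 0, then β = (N−1−p)/p (equivalently q = q_c := (N−1)p/(N−1−p) − 1), and in that case A = B = C = 0. -/

import Mathlib

/-!
Put `s = n - 1 - p (β + 1)`. The relation `β (q + 1) = p (β + 1)` makes all three Pohozaev
coefficients multiples of `s`: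
`A = s (p (β + 1) - 1) / (q + 1)`, `B = s (1 / p - β)`, `C = β² s (1 / p - β - 2 - s)`.
For `p > 1` the cofactor of `s` in `A` is positive, so `A ≥ 0` gives `s ≥ 0`; were `s` positive,
the cofactor in `C` would be negative, so `C ≥ 0` gives `s ≤ 0`. Hence `s = 0`, which says both
that `β` is critical and that `A = B = C = 0`.
-/

namespace LaneEmden

/-- The homogeneity exponent `β` of the separable solutions `|x|^(-β) ω(x / |x|)` of
`-Δ_p u = u^q`, positive in the range `q > p - 1`. -/
noncomputable def separableExponent (p q : ℝ) : ℝ :=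
  p / (q + 1 - p)

/-- The number `λ(β)` entering the Pohozaev coefficient `C`. The dimension `n` may be any real
number, here and below. -/
def separableLambda (n p β : ℝ) : ℝ :=
  β * (p - 1) + p - n

/-- The coefficient `A` of the Pohozaev identity for the spherical profile `ω`. The exponents `q`
and `β` are independent arguments; the identity uses `β = separableExponent p q`. -/
noncomputable def pohozaevA (n p q β : ℝ) : ℝ :=
  -((n - 1) / (q + 1)) - β * (p * β + p - n)

/-- The coefficient `B` of the Pohozaev identity for the spherical profile `ω`. -/
noncomputable def pohozaevB (n p β : ℝ) : ℝ :=
  (n - 1 - p) / p + β * (p * β + p - n)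

/-- The coefficient `C` of the Pohozaev identity for the spherical profile `ω`. -/
noncomputable def pohozaevC (n p β : ℝ) : ℝ :=
  β ^ 2 * ((n - 1) / p - (p * β + p - n) * separableLambda n p β)

/-- The deviation from criticality `p (β_c - β)`, where `β_c = (n - 1 - p) / p`, written without
division; it is the common factor of the three Pohozaev coefficients. -/
def criticalityGap (n p β : ℝ) : ℝ :=
  n - 1 - p * (β + 1)

variable {n p q β : ℝ}

theorem separableExponent_pos (hp : 0 < p) (hq : p - 1 < q) : 0 < separableExponent p q :=
  div_pos hp (by linarith)

theorem separableExponent_mul_add_one (h : q + 1 - p ≠ 0) :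
    separableExponent p q * (q + 1) = p * (separableExponent p q + 1) := by
  unfold separableExponent
  field_simp
  ring

theorem criticalityGap_eq_zero_iff (hp : p ≠ 0) :
    criticalityGap n p β = 0 ↔ β = (n - 1 - p) / p := by
  rw [criticalityGap, eq_div_iff hp]
  constructor <;> intro h <;> linarith

theorem sourceExponent_eq_of_criticalityGap_eq_zero (hp : p ≠ 0) (hβ : β ≠ 0)
    (hβq : β * (q + 1) = p * (β + 1)) (hgap : criticalityGap n p β = 0) :
    q = (n - 1) * p / (n - 1 - p) - 1 := by
  have hn : n - 1 = p * (β + 1) := sub_eq_zero.mp hgap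
  have hnp : n - 1 - p = p * β := by rw [hn]; ring
  rw [eq_sub_iff_add_eq, hnp, eq_div_iff (mul_ne_zero hp hβ), hn]
  linear_combination p * hβq

theorem pohozaevA_eq (hq : q + 1 ≠ 0) (hβq : β * (q + 1) = p * (β + 1)) :
    pohozaevA n p q β = criticalityGap n p β * ((p * (β + 1) - 1) / (q + 1)) := by
  unfold pohozaevA criticalityGap
  field_simp
  linear_combination (n - p * (β + 1)) * hβq

theorem pohozaevB_eq (hp : p ≠ 0) :
    pohozaevB n p β = criticalityGap n p β * (1 / p - β) := by
  unfold pohozaevB criticalityGap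
  field_simp
  ring

theorem pohozaevC_eq (hp : p ≠ 0) :
    pohozaevC n p β =
      β ^ 2 * (criticalityGap n p β * (1 / p - β - 2 - criticalityGap n p β)) := by
  unfold pohozaevC separableLambda criticalityGap
  field_simp
  ring

theorem criticalityGap_nonneg_of_pohozaevA_nonneg (hq : 0 < q + 1)
    (hβq : β * (q + 1) = p * (β + 1)) (hpβ : 1 < p * (β + 1)) (hA : 0 ≤ pohozaevA n p q β) :
    0 ≤ criticalityGap n p β := by
  rw [pohozaevA_eq hq.ne' hβq] at hA
  exact nonneg_of_mul_nonneg_left hA (div_pos (sub_pos.mpr hpβ) hq)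

theorem criticalityGap_nonpos_of_pohozaevC_nonneg (hp : p ≠ 0) (hβ : β ≠ 0)
    (hpβ : 1 / p ≤ β + 2) (hC : 0 ≤ pohozaevC n p β) : criticalityGap n p β ≤ 0 := by
  rw [pohozaevC_eq hp] at hC
  by_contra! hgap
  have hcofactor : 1 / p - β - 2 - criticalityGap n p β < 0 := by linarith
  exact hC.not_gt (mul_neg_of_pos_of_neg (by positivity) (mul_neg_of_pos_of_neg hgap hcofactor))

theorem criticalityGap_eq_zero (hp : 1 < p) (hq : p - 1 < q)
    (hA : 0 ≤ pohozaevA n p q (separableExponent p q))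
    (hC : 0 ≤ pohozaevC n p (separableExponent p q)) :
    criticalityGap n p (separableExponent p q) = 0 := by
  have hp0 : 0 < p := one_pos.trans hp
  have hβ : 0 < separableExponent p q := separableExponent_pos hp0 hq
  have hβq := separableExponent_mul_add_one (p := p) (q := q) (by linarith)
  have hpβ : 1 < p * (separableExponent p q + 1) := one_lt_mul hp.le (by linarith)
  have hp_inv : 1 / p < 1 := (div_lt_one hp0).mpr hp
  exact le_antisymm
    (criticalityGap_nonpos_of_pohozaevC_nonneg hp0.ne' hβ.ne' (by linarith) hC)
    (criticalityGap_nonneg_of_pohozaevA_nonneg (by linarith) hβq hpβ hA)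

end LaneEmden

open LaneEmden in
theorem stmt0_general {n p q : ℝ} (hp : 1 < p) (hq : p - 1 < q)
    (hA : 0 ≤ pohozaevA n p q (separableExponent p q))
    (hC : 0 ≤ pohozaevC n p (separableExponent p q)) :
    separableExponent p q = (n - 1 - p) / p ∧ q = (n - 1) * p / (n - 1 - p) - 1 ∧
      pohozaevA n p q (separableExponent p q) = 0 ∧
      pohozaevB n p (separableExponent p q) = 0 ∧
      pohozaevC n p (separableExponent p q) = 0 := by
  have hp0 : 0 < p := one_pos.trans hp
  have hβ : separableExponent p q ≠ 0 := (separableExponent_pos hp0 hq).ne'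
  have hβq := separableExponent_mul_add_one (p := p) (q := q) (by linarith)
  have hgap := criticalityGap_eq_zero hp hq hA hC
  refine ⟨(criticalityGap_eq_zero_iff hp0.ne').mp hgap,
    sourceExponent_eq_of_criticalityGap_eq_zero hp0.ne' hβ hβq hgap, ?_, ?_, ?_⟩
  · rw [pohozaevA_eq (by linarith) hβq, hgap, zero_mul]
  · rw [pohozaevB_eq hp0.ne', hgap, zero_mul]
  · rw [pohozaevC_eq hp0.ne', hgap, zero_mul, mul_zero]

/-- If the Pohozaev coefficients A, B, C are all nonnegative for
β = p/(q+1-p), then β equals the critical value (N-1-p)/p (equivalently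
q = q_c = (N-1)p/(N-1-p) - 1), and A = B = C = 0. -/
theorem stmt0 (N : ℕ) (hN : 3 ≤ N) (p q : ℝ) (hp : 1 < p) (hpN : p < (N : ℝ) - 1)
    (hq : p - 1 < q) (β lam A B C : ℝ)
    (hβ : β = p / (q + 1 - p))
    (hlam : lam = β * (p - 1) + p - N)
    (hA : A = -(((N : ℝ) - 1) / (q + 1)) - β * (p * β + p - N))
    (hB : B = ((N : ℝ) - 1 - p) / p + β * (p * β + p - N))
    (hC : C = β ^ 2 * (((N : ℝ) - 1) / p - (p * β + p - N) * lam))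
    (hA0 : 0 ≤ A) (hB0 : 0 ≤ B) (hC0 : 0 ≤ C) :
    β = ((N : ℝ) - 1 - p) / p ∧ q = ((N : ℝ) - 1) * p / ((N : ℝ) - 1 - p) - 1 ∧
      A = 0 ∧ B = 0 ∧ C = 0 := by
  subst hβ hlam hA hB hC
  exact stmt0_general hp hq hA0 hC0
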